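/- (Anderson–Mirkovi\u0107 conjecture, type A, in terms of Lusztig data.) For every Lusztig datum a ∈ ℬ, every 1 ≤ i ≤ n, and every K ∈ M_n^× with i ∉ K and i+1 ∈ K, one has M_K(f̃_i^* a) = min{ M_K(a), M_{s_iK}(a) + c_i^*(a) }, where s_iK = (K ∖ {i+1}) ∪ {i} and c_i^*(a) = M_{[i+1,n+1]}(a) − M_{{i}∪[i+2,n+1]}(a) − 1. -/

import Mathlib

/-- The set of Lusztig data: `a : Π → ℤ_{≥0}`, modeled as an integer-valued function on
`ℤ × ℤ` that is nonnegative everywhere and vanishes off `Π = {(k,l) : 1 ≤ k < l ≤ n+1}`. -/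
def IsLusztig (n : ℕ) (a : ℤ → ℤ → ℤ) : Prop :=
  (∀ k l : ℤ, 0 ≤ a k l) ∧ ∀ k l : ℤ, ¬(1 ≤ k ∧ k < l ∧ l ≤ (n : ℤ) + 1) → a k l = 0

/-- The `p`-th smallest element (1-indexed) `k_p` of a Maya diagram `K`. -/
def kth (K : Finset ℕ) (p : ℕ) : ℕ := (K.sort (· ≤ ·)).getD (p - 1) 0

/-- `C = (c_{p,q})_{1 ≤ p ≤ q ≤ l}` (with `l = |K|`) is a `K`-tableau: an upper-triangular
integer matrix with `c_{p,p} = k_p`, `c_{p,q} ≤ c_{p,q+1}` and `c_{p,q} < c_{p+1,q}`. -/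
def IsKTab (K : Finset ℕ) (c : ℕ → ℕ → ℤ) : Prop :=
  (∀ p : ℕ, 1 ≤ p → p ≤ K.card → c p p = (kth K p : ℤ)) ∧
  (∀ p q : ℕ, 1 ≤ p → p ≤ q → q + 1 ≤ K.card → c p q ≤ c p (q + 1)) ∧
  (∀ p q : ℕ, 1 ≤ p → p + 1 ≤ q → q ≤ K.card → c p q < c (p + 1) q)

/-- `Σ_{1 ≤ p < q ≤ l} a_{c_{p,q}, c_{p,q}+(q−p)}`. -/
def tabSum (a : ℤ → ℤ → ℤ) (K : Finset ℕ) (c : ℕ → ℕ → ℤ) : ℤ :=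
  ∑ p ∈ Finset.Icc 1 K.card, ∑ q ∈ Finset.Icc (p + 1) K.card,
    a (c p q) (c p q + ((q : ℤ) - (p : ℤ)))

/-- `M_K(a) = −Σ_{j=1}^{l} Σ_{i=1}^{k_j−1} a_{i,k_j} + min{ tabSum over K-tableaux }`,
for `K ∈ M_n^×`, with the conventions `M_∅(a) = M_{[1,n+1]}(a) = 0`. -/
noncomputable def MK (n : ℕ) (a : ℤ → ℤ → ℤ) (K : Finset ℕ) : ℤ :=
  if K = ∅ ∨ K = Finset.Icc 1 (n + 1) then 0
  else
    -(∑ k ∈ K, ∑ s ∈ Finset.Icc 1 (k - 1), a (s : ℤ) (k : ℤ)) +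
      sInf {z : ℤ | ∃ c : ℕ → ℕ → ℤ, IsKTab K c ∧ z = tabSum a K c}
/-- `A_l^{*(i)}(a) = Σ_{t=l+1}^{n+1} (a_{i,t} − a_{i+1,t+1})`. -/
def Astar (n : ℕ) (a : ℤ → ℤ → ℤ) (i l : ℕ) : ℤ :=
  ∑ t ∈ Finset.Icc (l + 1) (n + 1), (a (i : ℤ) (t : ℤ) - a ((i : ℤ) + 1) ((t : ℤ) + 1))

/-- `ε_i^*(a) = max{A_i^{*(i)}(a),…,A_n^{*(i)}(a)}`. -/
def epsStar (n : ℕ) (a : ℤ → ℤ → ℤ) (i : ℕ) : ℤ :=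
  ((Finset.Icc i n).image (Astar n a i)).max.unbotD 0

/-- `l_f(a,i)`: the minimal `l ∈ [i,n]` with `A_l^{*(i)}(a) = ε_i^*(a)`. -/
def lfStar (n : ℕ) (a : ℤ → ℤ → ℤ) (i : ℕ) : ℕ :=
  (((Finset.Icc i n).filter fun l => Astar n a i l = epsStar n a i).min).untopD 0

/-- `l_e(a,i)`: the maximal `l ∈ [i,n]` with `A_l^{*(i)}(a) = ε_i^*(a)`. -/
def leStar (n : ℕ) (a : ℤ → ℤ → ℤ) (i : ℕ) : ℕ :=
  (((Finset.Icc i n).filter fun l => Astar n a i l = epsStar n a i).max).unbotD 0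

/-- The operator `f̃_i^*`: increase `a_{i,l_f+1}` by 1 and decrease `a_{i+1,l_f+1}` by 1
(the latter discarded when `l_f = i`, the entry `(i+1,i+1)` being out of range). -/
def ftilStar (n : ℕ) (a : ℤ → ℤ → ℤ) (i : ℕ) : ℤ → ℤ → ℤ := fun k l =>
  if k = (i : ℤ) ∧ l = (lfStar n a i : ℤ) + 1 then a k l + 1
  else if k = (i : ℤ) + 1 ∧ l = (lfStar n a i : ℤ) + 1 ∧ (i : ℤ) < (lfStar n a i : ℤ) then
    a k l - 1
  else a k l

/-- The operator `ẽ_i^*` (for `ε_i^*(a) > 0`): decrease `a_{i,l_e+1}` by 1 and increase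
`a_{i+1,l_e+1}` by 1 (the latter discarded when `l_e = i`). -/
def etilStar (n : ℕ) (a : ℤ → ℤ → ℤ) (i : ℕ) : ℤ → ℤ → ℤ := fun k l =>
  if k = (i : ℤ) ∧ l = (leStar n a i : ℤ) + 1 then a k l - 1
  else if k = (i : ℤ) + 1 ∧ l = (leStar n a i : ℤ) + 1 ∧ (i : ℤ) < (leStar n a i : ℤ) then
    a k l + 1
  else a k l

/-!
Read along its diagonals, a `K`-tableau is a strict Gelfand–Tsetlin pattern with diagonal `0` equal
to `K`, and `M_K(a)` is, up to the column sums of `a`, the minimal weight of such a pattern. Since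
`M_K(a)` does not involve the entries `a_{k,k}`, the operator `f̃_i^*` may be replaced by `raise`,
which preserves all column sums, even when `l_f = i`.

Fix `i` and call a block of consecutive diagonals containing exactly one of `i`, `i + 1`, always
the same one, a run. Interlacing confines the obstructions to exchanging `i` and `i + 1` throughout
a run to its two ends, and exchanging them changes the weight by a difference of two values of
`A^{*(i)}`. Raising `a` alters the weight of a pattern by at most one, and only through the letters
`i + 1` on diagonal `m = l_f - i` and `i` on diagonal `m + 1`. Because `m` is the first index where
the gain is maximal, exchanging the run that ends or begins there yields a comparison pattern on
`K` or on `s_i K`, with the gain of the run against the maximal one accounting for the unit change.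
For `K = [i + 1, n + 1]` the run of `i + 1` starting at diagonal `0` is forced to be long enough,
so the two minima differ by the maximal gain exactly; this computes `c_i^*(a)`.
-/

open Finset

section Patterns

/-- A strict Gelfand–Tsetlin pattern of size `L`: diagonal `d` has the entries `x d p`, `p < L - d`,
and consecutive diagonals interlace. Diagonal `d` of a `K`-tableau becomes
`x d p = c (p + 1) (p + 1 + d)`, with `p` counted from `0`. -/
structure IsGTPattern (L : ℕ) (x : ℕ → ℕ → ℤ) : Prop where
  le_next : ∀ ⦃d p : ℕ⦄, p + (d + 1) < L → x d p ≤ x (d + 1) p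
  next_lt : ∀ ⦃d p : ℕ⦄, p + (d + 1) < L → x (d + 1) p < x d (p + 1)

/-- The set of entries on diagonal `d` of a pattern of size `L`. -/
def diagEntries (L : ℕ) (x : ℕ → ℕ → ℤ) (d : ℕ) : Finset ℤ := (range (L - d)).image (x d)

/-- The patterns of size `L` whose diagonal `0` is the set `S`. -/
def gtPatterns (L : ℕ) (S : Finset ℤ) : Set (ℕ → ℕ → ℤ) :=
  {x | IsGTPattern L x ∧ diagEntries L x 0 = S}

variable {L : ℕ} {x : ℕ → ℕ → ℤ} {d : ℕ} {v : ℤ}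

lemma mem_diagEntries : v ∈ diagEntries L x d ↔ ∃ p, p + d < L ∧ x d p = v := by
  simp only [diagEntries, mem_image, mem_range, Nat.lt_sub_iff_add_lt]

lemma apply_mem_diagEntries {p : ℕ} (h : p + d < L) : x d p ∈ diagEntries L x d :=
  mem_diagEntries.2 ⟨p, h, rfl⟩

lemma lt_of_mem_diagEntries (h : v ∈ diagEntries L x d) : d < L := by
  obtain ⟨p, hp, -⟩ := mem_diagEntries.1 h
  lia

namespace IsGTPattern

lemma strictMonoOn (hx : IsGTPattern L x) (d : ℕ) : StrictMonoOn (x d) (Set.Iio (L - d)) := by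
  refine strictMonoOn_of_lt_add_one Set.ordConnected_Iio fun p _ _ hp ↦ ?_
  have hp' : p + (d + 1) < L := by grind
  exact (hx.le_next hp').trans_lt (hx.next_lt hp')

lemma exists_consecutive (hx : IsGTPattern L x) (hv : v ∈ diagEntries L x d)
    (hv' : v + 1 ∈ diagEntries L x d) :
    ∃ p, p + (d + 1) < L ∧ x d p = v ∧ x d (p + 1) = v + 1 := by
  obtain ⟨p, hp, rfl⟩ := mem_diagEntries.1 hv
  obtain ⟨r, hr, hpr⟩ := mem_diagEntries.1 hv'
  have hmem {q : ℕ} (hq : q + d < L) : q ∈ Set.Iio (L - d) := Nat.lt_sub_of_add_lt hq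
  have hlt : p < r := ((hx.strictMonoOn d).lt_iff_lt (hmem hp) (hmem hr)).1 (by lia)
  have hnext : x d p < x d (p + 1) :=
    hx.strictMonoOn d (hmem hp) (hmem (by lia)) (Nat.lt_succ_self p)
  have hle : x d (p + 1) ≤ x d r := (hx.strictMonoOn d).monotoneOn (hmem (by lia)) (hmem hr) hlt
  exact ⟨p, by lia, rfl, by lia⟩

lemma mem_next (hx : IsGTPattern L x) (hv : v ∈ diagEntries L x d)
    (hv' : v + 1 ∈ diagEntries L x d) : v ∈ diagEntries L x (d + 1) := by
  obtain ⟨p, hp, hpv, hpv'⟩ := hx.exists_consecutive hv hv'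
  have hle := hx.le_next hp
  have hlt := hx.next_lt hp
  exact mem_diagEntries.2 ⟨p, hp, by lia⟩

lemma add_one_mem_prev (hx : IsGTPattern L x) (hv : v ∈ diagEntries L x (d + 1))
    (hv' : v + 1 ∈ diagEntries L x (d + 1)) : v + 1 ∈ diagEntries L x d := by
  obtain ⟨p, hp, hpv, hpv'⟩ := hx.exists_consecutive hv hv'
  have hlt : x (d + 1) p < x d (p + 1) := hx.next_lt (by lia)
  have hle : x d (p + 1) ≤ x (d + 1) (p + 1) := hx.le_next (by lia)
  exact mem_diagEntries.2 ⟨p + 1, by lia, by lia⟩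

lemma le_of_mem (hx : IsGTPattern L x) {b : ℤ} (hb : ∀ v ∈ diagEntries L x 0, b ≤ v)
    (hv : v ∈ diagEntries L x d) : b ≤ v := by
  induction d generalizing v with
  | zero => exact hb v hv
  | succ d ih =>
    obtain ⟨p, hp, rfl⟩ := mem_diagEntries.1 hv
    exact (ih (apply_mem_diagEntries (by lia))).trans (hx.le_next hp)

lemma mem_of_interval (hx : IsGTPattern L x) {b t : ℤ}
    (h : ∀ v, b ≤ v → v ≤ t → v ∈ diagEntries L x 0) (hbv : b ≤ v) (hvt : v + d ≤ t) :
    v ∈ diagEntries L x d := by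
  induction d generalizing v with
  | zero => exact h v hbv (by simpa using hvt)
  | succ d ih => exact hx.mem_next (ih hbv (by lia)) (ih (by lia) (by lia))

end IsGTPattern

end Patterns

section Runs

/-- Exchange the entries `i` and `i + 1` on the diagonals `d ∈ [s, e)`. -/
def swapDiags (i : ℤ) (s e : ℕ) (x : ℕ → ℕ → ℤ) : ℕ → ℕ → ℤ := fun d p ↦
  if s ≤ d ∧ d < e then Equiv.swap i (i + 1) (x d p) else x d p

/-- The diagonals `d ∈ [s, e)` form a run: each contains the letter `v` and not the letter `w`,
where `{v, w} = {i, i + 1}`, and the diagonals bordering `[s, e)` do not obstruct replacing `v` by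
`w` throughout the run. -/
structure IsRun (L : ℕ) (x : ℕ → ℕ → ℤ) (i v w : ℤ) (s e : ℕ) : Prop where
  pair : v = i ∧ w = i + 1 ∨ v = i + 1 ∧ w = i
  mem : ∀ d, s ≤ d → d < e → v ∈ diagEntries L x d
  notMem : ∀ d, s ≤ d → d < e → w ∉ diagEntries L x d
  notMem_after : i ∉ diagEntries L x e
  notMem_before : ∀ d, d + 1 = s → i + 1 ∉ diagEntries L x d

variable {L : ℕ} {x : ℕ → ℕ → ℤ} {i v w : ℤ} {s e : ℕ}

lemma diagEntries_swapDiags (L : ℕ) (x : ℕ → ℕ → ℤ) (i : ℤ) (s e d : ℕ) :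
    diagEntries L (swapDiags i s e x) d =
      if s ≤ d ∧ d < e then (diagEntries L x d).map (Equiv.swap i (i + 1)).toEmbedding
      else diagEntries L x d := by
  unfold diagEntries swapDiags
  split_ifs
  · rw [map_eq_image, image_image]
    rfl
  · rfl

lemma IsRun.swap_left (h : IsRun L x i v w s e) : Equiv.swap i (i + 1) v = w := by
  grind [h.pair]

lemma IsRun.isGTPattern_swapDiags (h : IsRun L x i v w s e) (hx : IsGTPattern L x) :
    IsGTPattern L (swapDiags i s e x) := by
  have hw : ∀ d p, s ≤ d → d < e → p + d < L → x d p ≠ w := fun d p hs he hp heq ↦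
    h.notMem d hs he (heq ▸ apply_mem_diagEntries hp)
  have hafter : ∀ p, p + e < L → x e p ≠ i := fun p hp heq ↦
    h.notMem_after (heq ▸ apply_mem_diagEntries hp)
  have hbefore : ∀ d p, d + 1 = s → p + d < L → x d p ≠ i + 1 := fun d p hs hp heq ↦
    h.notMem_before d hs (heq ▸ apply_mem_diagEntries hp)
  constructor
  · intro d p hp
    have hle := hx.le_next hp
    grind [swapDiags, h.pair]
  · intro d p hp
    have hlt := hx.next_lt hp
    grind [swapDiags, h.pair]

lemma IsRun.swapDiags_mem_gtPatterns (h : IsRun L x i v w s e) {S : Finset ℤ}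
    (hx : x ∈ gtPatterns L S) (hs : 0 < s) : swapDiags i s e x ∈ gtPatterns L S :=
  ⟨h.isGTPattern_swapDiags hx.1, by rw [diagEntries_swapDiags, if_neg (by lia), hx.2]⟩

lemma IsRun.swapDiags_mem_gtPatterns_map (h : IsRun L x i v w 0 e) {S : Finset ℤ}
    (hx : x ∈ gtPatterns L S) (he : 0 < e) :
    swapDiags i 0 e x ∈ gtPatterns L (S.map (Equiv.swap i (i + 1)).toEmbedding) :=
  ⟨h.isGTPattern_swapDiags hx.1, by rw [diagEntries_swapDiags, if_pos ⟨le_rfl, he⟩, hx.2]⟩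

lemma IsRun.right_mem_swapDiags (h : IsRun L x i v w s e) {d : ℕ} (hs : s ≤ d) (he : d < e) :
    w ∈ diagEntries L (swapDiags i s e x) d := by
  rw [diagEntries_swapDiags, if_pos ⟨hs, he⟩, ← h.swap_left]
  exact mem_map_of_mem _ (h.mem d hs he)

lemma IsRun.left_notMem_swapDiags (h : IsRun L x i v w s e) {d : ℕ} (hs : s ≤ d) (he : d < e) :
    v ∉ diagEntries L (swapDiags i s e x) d := by
  rw [diagEntries_swapDiags, if_pos ⟨hs, he⟩, mem_map_equiv, Equiv.symm_swap, h.swap_left]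
  exact h.notMem d hs he

lemma IsGTPattern.exists_isRun_from (hx : IsGTPattern L x) (hi : i ∈ diagEntries L x s)
    (hi' : i + 1 ∉ diagEntries L x s) (hs : ∀ d, d + 1 = s → i + 1 ∉ diagEntries L x d) :
    ∃ e, s < e ∧ IsRun L x i i (i + 1) s e := by
  have hex : ∃ e, s ≤ e ∧ i ∉ diagEntries L x e :=
    ⟨L, (lt_of_mem_diagEntries hi).le, fun h ↦ (lt_of_mem_diagEntries h).false⟩
  obtain ⟨e, he, hmin⟩ : ∃ e, (s ≤ e ∧ i ∉ diagEntries L x e) ∧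
      ∀ d < e, ¬(s ≤ d ∧ i ∉ diagEntries L x d) :=
    ⟨Nat.find hex, Nat.find_spec hex, fun d hd ↦ Nat.find_min hex hd⟩
  have hmem : ∀ d, s ≤ d → d < e → i ∈ diagEntries L x d := fun d hsd hde ↦
    not_not.1 fun h ↦ hmin d hde ⟨hsd, h⟩
  have hnot : ∀ d, s ≤ d → d < e → i + 1 ∉ diagEntries L x d := by
    intro d hsd
    induction d, hsd using Nat.le_induction with
    | base => exact fun _ ↦ hi'
    | succ d hsd ih => exact fun hde h ↦ ih (by lia) (hx.add_one_mem_prev (hmem _ (by lia) hde) h)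
  have hse : s < e := lt_of_le_of_ne he.1 (by rintro rfl; exact he.2 hi)
  exact ⟨e, hse, .inl ⟨rfl, rfl⟩, hmem, hnot, he.2, hs⟩

lemma IsGTPattern.exists_isRun_upto (hx : IsGTPattern L x) {m : ℕ}
    (hm : i + 1 ∈ diagEntries L x m) (hm' : i ∉ diagEntries L x (m + 1)) :
    ∃ s ≤ m, IsRun L x i (i + 1) i s (m + 1) := by
  have hex : ∃ s, ∀ d, s ≤ d → d < m + 1 → i + 1 ∈ diagEntries L x d :=
    ⟨m, fun d hmd hdm ↦ (show d = m by lia) ▸ hm⟩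
  obtain ⟨s, hmem, hmin⟩ : ∃ s, (∀ d, s ≤ d → d < m + 1 → i + 1 ∈ diagEntries L x d) ∧
      ∀ t < s, ¬∀ d, t ≤ d → d < m + 1 → i + 1 ∈ diagEntries L x d :=
    ⟨Nat.find hex, Nat.find_spec hex, fun t ht ↦ Nat.find_min hex ht⟩
  have hsm : s ≤ m := not_lt.1 fun hms ↦
    hmin m hms fun d hmd hdm ↦ (show d = m by lia) ▸ hm
  have hnot : ∀ d, s ≤ d → d ≤ m + 1 → i ∉ diagEntries L x d := by
    intro d hsd hdm
    induction hdm using Nat.decreasingInduction with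
    | self => exact hm'
    | of_succ d hdm ih => exact fun h ↦ ih (by lia) (hx.mem_next h (hmem d hsd hdm))
  refine ⟨s, hsm, .inr ⟨rfl, rfl⟩, hmem, fun d hsd hde ↦ hnot d hsd hde.le, hm', ?_⟩
  rintro t rfl ht
  refine hmin t (Nat.lt_succ_self t) fun d htd hdm ↦ ?_
  rcases htd.eq_or_lt with rfl | htd
  exacts [ht, hmem d htd hdm]

end Runs

section Weights

/-- The weight of a pattern: the sum of `a v (v + d)` over all entries `v` of all diagonals `d`.
Unlike in `tabSum`, diagonal `0` is included; it contributes the entries `a k k`. -/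
def gtWeight (a : ℤ → ℤ → ℤ) (L : ℕ) (x : ℕ → ℕ → ℤ) : ℤ :=
  ∑ d ∈ range L, ∑ v ∈ diagEntries L x d, a v (v + d)

/-- The weight gained by replacing `i` by `i + 1` on the diagonals `0, …, d - 1`. Up to an additive
constant, `swapGain a i (m + 1)` is `A_{i+m}^{*(i)}(a)`. -/
def swapGain (a : ℤ → ℤ → ℤ) (i : ℤ) (d : ℕ) : ℤ :=
  ∑ t ∈ range d, (a (i + 1) (i + 1 + t) - a i (i + t))

/-- The datum with a single nonzero entry, `1` at `(v, v + d)`. -/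
def unitDatum (v : ℤ) (d : ℕ) : ℤ → ℤ → ℤ := fun k l ↦ if k = v ∧ l = v + d then 1 else 0

/-- The datum obtained from `a` by adding `1` at `(i, i + m + 1)` and subtracting `1` at
`(i + 1, i + m + 1)`; for `m = 0` the subtraction takes place on the main diagonal instead of being
discarded. -/
def raise (a : ℤ → ℤ → ℤ) (i : ℤ) (m : ℕ) : ℤ → ℤ → ℤ :=
  a + unitDatum i (m + 1) - unitDatum (i + 1) m

variable {a : ℤ → ℤ → ℤ} {L : ℕ} {x : ℕ → ℕ → ℤ} {i v w : ℤ} {s e m : ℕ}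

lemma sum_map_swap {S : Finset ℤ} {j : ℤ} (f : ℤ → ℤ) (hv : v ∈ S)
    (hw : Equiv.swap i j v ∉ S) (hvij : v = i ∨ v = j) :
    ∑ u ∈ S.map (Equiv.swap i j).toEmbedding, f u =
      ∑ u ∈ S, f u + (f (Equiv.swap i j v) - f v) := by
  rw [sum_map, ← sub_eq_iff_eq_add', ← sum_sub_distrib]
  refine sum_eq_single_of_mem v hv fun u hu huv ↦ ?_
  have hswap : Equiv.swap i j u = u := by grind
  simp [hswap]

lemma IsRun.gtWeight_swapDiags (h : IsRun L x i v w s e) (a : ℤ → ℤ → ℤ) :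
    gtWeight a L (swapDiags i s e x) =
      gtWeight a L x + ∑ d ∈ Ico s e, (a w (w + d) - a v (v + d)) := by
  have hdiag (d : ℕ) : ∑ u ∈ diagEntries L (swapDiags i s e x) d, a u (u + d) =
      ∑ u ∈ diagEntries L x d, a u (u + d) +
        if d ∈ Ico s e then a w (w + d) - a v (v + d) else 0 := by
    simp only [diagEntries_swapDiags, mem_Ico]
    split_ifs with hd
    · have hw := h.notMem d hd.1 hd.2
      rw [← h.swap_left] at hw ⊢
      exact sum_map_swap (fun u ↦ a u (u + d)) (h.mem d hd.1 hd.2) hw (by grind [h.pair])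
    · simp
  have hsub : Ico s e ⊆ range L := fun d hd ↦ by
    rw [mem_Ico] at hd
    exact mem_range.2 (lt_of_mem_diagEntries (h.mem d hd.1 hd.2))
  simp only [gtWeight, hdiag, sum_add_distrib, sum_ite_mem, inter_eq_right.2 hsub]

lemma swapGain_zero (a : ℤ → ℤ → ℤ) (i : ℤ) : swapGain a i 0 = 0 :=
  sum_range_zero _

lemma swapGain_succ (a : ℤ → ℤ → ℤ) (i : ℤ) (d : ℕ) :
    swapGain a i (d + 1) = swapGain a i d + (a (i + 1) (i + 1 + d) - a i (i + d)) :=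
  sum_range_succ _ d

lemma sum_Ico_eq_swapGain_sub (a : ℤ → ℤ → ℤ) (i : ℤ) (hse : s ≤ e) :
    ∑ d ∈ Ico s e, (a (i + 1) (i + 1 + d) - a i (i + d)) = swapGain a i e - swapGain a i s :=
  sum_Ico_eq_sub _ hse

lemma IsRun.gtWeight_swapDiags_up (h : IsRun L x i i (i + 1) s e) (hse : s ≤ e)
    (a : ℤ → ℤ → ℤ) :
    gtWeight a L (swapDiags i s e x) = gtWeight a L x + (swapGain a i e - swapGain a i s) := by
  rw [h.gtWeight_swapDiags, sum_Ico_eq_swapGain_sub a i hse]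

lemma IsRun.gtWeight_swapDiags_down (h : IsRun L x i (i + 1) i s e) (hse : s ≤ e)
    (a : ℤ → ℤ → ℤ) :
    gtWeight a L (swapDiags i s e x) = gtWeight a L x - (swapGain a i e - swapGain a i s) := by
  rw [h.gtWeight_swapDiags, ← sum_Ico_eq_swapGain_sub a i hse, sub_eq_add_neg, ← sum_neg_distrib]
  simp only [neg_sub]

lemma gtWeight_unitDatum (L : ℕ) (x : ℕ → ℕ → ℤ) (v : ℤ) (d : ℕ) :
    gtWeight (unitDatum v d) L x = if v ∈ diagEntries L x d then 1 else 0 := by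
  have hentry (u : ℤ) (t : ℕ) :
      unitDatum v d u (u + t) = if u = v then if t = d then 1 else 0 else 0 := by
    grind [unitDatum]
  have hdiag (t : ℕ) :
      (∑ u ∈ diagEntries L x t, if u = v then if t = d then (1 : ℤ) else 0 else 0) =
        if t = d then if v ∈ diagEntries L x d then 1 else 0 else 0 := by
    rw [sum_ite_eq']
    grind
  simp only [gtWeight, hentry, hdiag, sum_ite_eq', mem_range]
  grind [lt_of_mem_diagEntries]

lemma gtWeight_raise (a : ℤ → ℤ → ℤ) (L : ℕ) (x : ℕ → ℕ → ℤ) (i : ℤ) (m : ℕ) :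
    gtWeight (raise a i m) L x = gtWeight a L x
      + (if i ∈ diagEntries L x (m + 1) then 1 else 0)
      - (if i + 1 ∈ diagEntries L x m then 1 else 0) := by
  rw [← gtWeight_unitDatum, ← gtWeight_unitDatum]
  simp only [raise, gtWeight, Pi.add_apply, Pi.sub_apply, sum_add_distrib, sum_sub_distrib]

lemma gtWeight_raise_le (h : i ∈ diagEntries L x (m + 1) → i + 1 ∈ diagEntries L x m) :
    gtWeight (raise a i m) L x ≤ gtWeight a L x := by
  grind [gtWeight_raise]

lemma le_gtWeight_raise (h : i + 1 ∈ diagEntries L x m → i ∈ diagEntries L x (m + 1)) :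
    gtWeight a L x ≤ gtWeight (raise a i m) L x := by
  grind [gtWeight_raise]

lemma gtWeight_raise_eq_sub_one (h : i + 1 ∈ diagEntries L x m)
    (h' : i ∉ diagEntries L x (m + 1)) :
    gtWeight (raise a i m) L x = gtWeight a L x - 1 := by
  grind [gtWeight_raise]

end Weights

section Minima

/-- `m` is the first index at which `m ↦ swapGain a i (m + 1)` attains its maximum; this is
`l_f - i` for a Lusztig datum `a`. -/
structure IsFirstMaxGain (a : ℤ → ℤ → ℤ) (i : ℤ) (m : ℕ) : Prop where
  le : ∀ d, swapGain a i (d + 1) ≤ swapGain a i (m + 1)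
  lt : ∀ d < m, swapGain a i (d + 1) < swapGain a i (m + 1)

variable {a : ℤ → ℤ → ℤ} {L : ℕ} {x : ℕ → ℕ → ℤ} {i : ℤ} {m : ℕ} {S : Finset ℤ}

lemma IsFirstMaxGain.swapGain_le (h : IsFirstMaxGain a i m) {e : ℕ} (he : 0 < e) :
    swapGain a i e ≤ swapGain a i (m + 1) := by
  simpa only [Nat.sub_add_cancel he] using h.le (e - 1)

lemma IsFirstMaxGain.swapGain_lt (h : IsFirstMaxGain a i m) {e : ℕ} (he : 0 < e) (hem : e ≤ m) :
    swapGain a i e < swapGain a i (m + 1) := by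
  simpa only [Nat.sub_add_cancel he] using h.lt (e - 1) (by lia)

lemma map_swap_map_swap (S : Finset ℤ) (i j : ℤ) :
    (S.map (Equiv.swap i j).toEmbedding).map (Equiv.swap i j).toEmbedding = S := by
  ext
  simp only [mem_map_equiv, Equiv.symm_swap, Equiv.swap_apply_self]

lemma exists_isRun_of_mem_map_swap (hi : i ∉ S) (hi' : i + 1 ∈ S)
    (hx : x ∈ gtPatterns L (S.map (Equiv.swap i (i + 1)).toEmbedding)) :
    ∃ e, 0 < e ∧ IsRun L x i i (i + 1) 0 e ∧ swapDiags i 0 e x ∈ gtPatterns L S := by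
  obtain ⟨e, he, hrun⟩ := hx.1.exists_isRun_from (i := i) (s := 0)
    (by simpa [hx.2, mem_map_equiv] using hi') (by simpa [hx.2, mem_map_equiv] using hi)
    (fun d hd ↦ absurd hd (Nat.succ_ne_zero d))
  have hmem := hrun.swapDiags_mem_gtPatterns_map hx he
  rw [map_swap_map_swap] at hmem
  exact ⟨e, he, hrun, hmem⟩

lemma exists_gtWeight_le_add_swapGain (hm : IsFirstMaxGain a i m) (hi : i ∉ S) (hi' : i + 1 ∈ S)
    (hx : x ∈ gtPatterns L (S.map (Equiv.swap i (i + 1)).toEmbedding)) :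
    ∃ y ∈ gtPatterns L S, gtWeight a L y ≤ gtWeight a L x + swapGain a i (m + 1) := by
  obtain ⟨e, he, hrun, hy⟩ := exists_isRun_of_mem_map_swap hi hi' hx
  refine ⟨_, hy, ?_⟩
  have hgain := hm.swapGain_le he
  have hzero := swapGain_zero a i
  rw [hrun.gtWeight_swapDiags_up he.le]
  lia

lemma exists_gtWeight_raise_le (hm : IsFirstMaxGain a i m) (hx : x ∈ gtPatterns L S) :
    ∃ y ∈ gtPatterns L S, gtWeight (raise a i m) L y ≤ gtWeight a L x := by
  by_cases hrise : i ∈ diagEntries L x (m + 1) → i + 1 ∈ diagEntries L x m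
  · exact ⟨x, hx, gtWeight_raise_le hrise⟩
  obtain ⟨hi, hi'⟩ := Classical.not_imp.1 hrise
  obtain ⟨e, he, hrun⟩ := hx.1.exists_isRun_from hi
    (fun h ↦ hi' (hx.1.add_one_mem_prev hi h)) (fun d hd ↦ by rwa [Nat.succ_injective hd])
  refine ⟨_, hrun.swapDiags_mem_gtPatterns hx m.succ_pos, ?_⟩
  calc gtWeight (raise a i m) L (swapDiags i (m + 1) e x)
      ≤ gtWeight a L (swapDiags i (m + 1) e x) :=
        gtWeight_raise_le fun h ↦ absurd h (hrun.left_notMem_swapDiags le_rfl he)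
    _ = gtWeight a L x + (swapGain a i e - swapGain a i (m + 1)) :=
        hrun.gtWeight_swapDiags_up he.le a
    _ ≤ gtWeight a L x := by linarith [hm.swapGain_le (m.succ_pos.trans he)]

lemma exists_gtWeight_raise_le_add_swapGain (hm : IsFirstMaxGain a i m) (hi : i ∉ S)
    (hi' : i + 1 ∈ S) (hx : x ∈ gtPatterns L (S.map (Equiv.swap i (i + 1)).toEmbedding)) :
    ∃ y ∈ gtPatterns L S,
      gtWeight (raise a i m) L y ≤ gtWeight a L x + swapGain a i (m + 1) - 1 := by
  obtain ⟨e, he, hrun, hy⟩ := exists_isRun_of_mem_map_swap hi hi' hx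
  have hzero := swapGain_zero a i
  have hweight := hrun.gtWeight_swapDiags_up he.le a
  rcases le_or_gt e m with hem | hme
  · obtain ⟨y, hyS, hyle⟩ := exists_gtWeight_raise_le hm hy
    have hgain := hm.swapGain_lt he hem
    exact ⟨y, hyS, by lia⟩
  · have hnot : i ∉ diagEntries L (swapDiags i 0 e x) (m + 1) := by
      rcases (Nat.succ_le_of_lt hme).eq_or_lt with rfl | hme
      · rw [diagEntries_swapDiags, if_neg (by lia)]
        exact hrun.notMem_after
      · exact hrun.left_notMem_swapDiags (Nat.zero_le _) hme
    have hraise := gtWeight_raise_eq_sub_one (a := a)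
      (hrun.right_mem_swapDiags (Nat.zero_le m) hme) hnot
    have hgain := hm.swapGain_le he
    exact ⟨_, hy, by lia⟩

lemma exists_gtWeight_le_raise (hm : IsFirstMaxGain a i m) (hx : x ∈ gtPatterns L S) :
    (∃ y ∈ gtPatterns L S, gtWeight a L y ≤ gtWeight (raise a i m) L x) ∨
      ∃ y ∈ gtPatterns L (S.map (Equiv.swap i (i + 1)).toEmbedding),
        gtWeight a L y + swapGain a i (m + 1) - 1 ≤ gtWeight (raise a i m) L x := by
  by_cases hdrop : i + 1 ∈ diagEntries L x m → i ∈ diagEntries L x (m + 1)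
  · exact .inl ⟨x, hx, le_gtWeight_raise hdrop⟩
  obtain ⟨hi', hi⟩ := Classical.not_imp.1 hdrop
  obtain ⟨s, hsm, hrun⟩ := hx.1.exists_isRun_upto hi' hi
  have hraise := gtWeight_raise_eq_sub_one (a := a) hi' hi
  have hweight := hrun.gtWeight_swapDiags_down (hsm.trans m.le_succ) a
  rcases s.eq_zero_or_pos with rfl | hs
  · have hzero := swapGain_zero a i
    exact .inr ⟨_, hrun.swapDiags_mem_gtPatterns_map hx m.succ_pos, by lia⟩
  · have hgain := hm.swapGain_lt hs hsm
    exact .inl ⟨_, hrun.swapDiags_mem_gtPatterns hx hs, by lia⟩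

theorem isLeast_gtWeight_raise (hm : IsFirstMaxGain a i m) (hi : i ∉ S) (hi' : i + 1 ∈ S) {b b' : ℤ}
    (hb : IsLeast (gtWeight a L '' gtPatterns L S) b)
    (hb' : IsLeast (gtWeight a L '' gtPatterns L (S.map (Equiv.swap i (i + 1)).toEmbedding)) b') :
    IsLeast (gtWeight (raise a i m) L '' gtPatterns L S)
      (min b (b' + swapGain a i (m + 1) - 1)) := by
  have hlower : ∀ x ∈ gtPatterns L S,
      min b (b' + swapGain a i (m + 1) - 1) ≤ gtWeight (raise a i m) L x := by
    intro x hx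
    rcases exists_gtWeight_le_raise hm hx with ⟨y, hy, hle⟩ | ⟨y, hy, hle⟩
    · exact (min_le_left _ _).trans ((hb.2 ⟨y, hy, rfl⟩).trans hle)
    · have := hb'.2 ⟨y, hy, rfl⟩
      exact (min_le_right _ _).trans (by lia)
  obtain ⟨x, hx, rfl⟩ := hb.1
  obtain ⟨x', hx', rfl⟩ := hb'.1
  obtain ⟨y, hy, hle⟩ := exists_gtWeight_raise_le hm hx
  obtain ⟨y', hy', hle'⟩ := exists_gtWeight_raise_le_add_swapGain hm hi hi' hx'
  refine ⟨?_, by rintro _ ⟨z, hz, rfl⟩; exact hlower z hz⟩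
  rcases min_choice (gtWeight a L x) (gtWeight a L x' + swapGain a i (m + 1) - 1) with h | h
  · exact ⟨y, hy, le_antisymm (hle.trans_eq h.symm) (hlower y hy)⟩
  · exact ⟨y', hy', le_antisymm (hle'.trans_eq h.symm) (hlower y' hy')⟩

lemma exists_gtWeight_add_swapGain_eq {t : ℤ} (ht : i + 1 + m ≤ t)
    (hx : x ∈ gtPatterns L (Icc (i + 1) t)) :
    ∃ y ∈ gtPatterns L ((Icc (i + 1) t).map (Equiv.swap i (i + 1)).toEmbedding),
      gtWeight a L y + swapGain a i (m + 1) = gtWeight a L x := by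
  have hnot (d : ℕ) : i ∉ diagEntries L x d := fun h ↦
    absurd (hx.1.le_of_mem (b := i + 1) (by simp +contextual [hx.2]) h) (by lia)
  have hmem (d : ℕ) (hd : d < m + 1) : i + 1 ∈ diagEntries L x d :=
    hx.1.mem_of_interval (t := t) (by simp +contextual [hx.2]) le_rfl (by lia)
  have hrun : IsRun L x i (i + 1) i 0 (m + 1) :=
    ⟨.inr ⟨rfl, rfl⟩, fun d _ ↦ hmem d, fun d _ _ ↦ hnot d, hnot _,
      fun d hd ↦ absurd hd (Nat.succ_ne_zero d)⟩
  refine ⟨_, hrun.swapDiags_mem_gtPatterns_map hx m.succ_pos, ?_⟩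
  have hzero := swapGain_zero a i
  rw [hrun.gtWeight_swapDiags_down (Nat.zero_le _)]
  lia

theorem isLeast_gtWeight_Icc_eq_add_swapGain (hm : IsFirstMaxGain a i m) {t : ℤ}
    (ht : i + 1 + m ≤ t) {b b' : ℤ}
    (hb : IsLeast (gtWeight a L '' gtPatterns L (Icc (i + 1) t)) b)
    (hb' : IsLeast (gtWeight a L ''
      gtPatterns L ((Icc (i + 1) t).map (Equiv.swap i (i + 1)).toEmbedding)) b') :
    b = b' + swapGain a i (m + 1) := by
  obtain ⟨x, hx, rfl⟩ := hb.1
  obtain ⟨x', hx', rfl⟩ := hb'.1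
  apply le_antisymm
  · obtain ⟨y, hy, hle⟩ := exists_gtWeight_le_add_swapGain hm (S := Icc (i + 1) t)
      (by simp) (left_mem_Icc.2 (by lia)) hx'
    exact (hb.2 ⟨y, hy, rfl⟩).trans hle
  · obtain ⟨y, hy, heq⟩ := exists_gtWeight_add_swapGain_eq (a := a) ht hx
    have := hb'.2 ⟨y, hy, rfl⟩
    lia

end Minima

section Tableaux

/-- The diagonals of a tableau `c`, whose rows and columns are numbered from `1`. -/
def diagonals (c : ℕ → ℕ → ℤ) : ℕ → ℕ → ℤ := fun d p ↦ c (p + 1) (p + 1 + d)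

variable {K : Finset ℕ} {c : ℕ → ℕ → ℤ} {x : ℕ → ℕ → ℤ} {L : ℕ}

lemma diagonals_surjective : Function.Surjective diagonals := fun x ↦
  ⟨fun p q ↦ x (q - p) (p - 1), by ext d p; simp [diagonals]⟩

lemma isGTPattern_diagonals_iff :
    IsGTPattern L (diagonals c) ↔
      (∀ p q : ℕ, 1 ≤ p → p ≤ q → q + 1 ≤ L → c p q ≤ c p (q + 1)) ∧
        ∀ p q : ℕ, 1 ≤ p → p + 1 ≤ q → q ≤ L → c p q < c (p + 1) q := by
  constructor
  · rintro ⟨hle, hlt⟩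
    constructor
    · intro p q hp hpq hq
      obtain ⟨p, rfl⟩ := Nat.exists_eq_add_of_le' hp
      obtain ⟨d, rfl⟩ := Nat.exists_eq_add_of_le hpq
      exact hle (by lia)
    · intro p q hp hpq hq
      obtain ⟨p, rfl⟩ := Nat.exists_eq_add_of_le' hp
      obtain ⟨d, rfl⟩ := Nat.exists_eq_add_of_le hpq
      simpa only [diagonals, add_assoc, add_comm d] using hlt (d := d) (p := p) (by lia)
  · rintro ⟨hle, hlt⟩
    constructor
    · intro d p hp
      exact hle (p + 1) (p + 1 + d) (by lia) (by lia) (by lia)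
    · intro d p hp
      have := hlt (p + 1) (p + 1 + 1 + d) (by lia) (by lia) (by lia)
      simpa only [diagonals, add_assoc, add_comm d] using this

lemma kth_add_one {p : ℕ} (hp : p < K.card) : kth K (p + 1) = K.orderEmbOfFin rfl ⟨p, hp⟩ := by
  rw [kth, orderEmbOfFin_apply]
  exact List.getD_eq_getElem _ _ (by simpa using hp)

lemma image_kth_range (K : Finset ℕ) : (range K.card).image (fun p ↦ kth K (p + 1)) = K := by
  ext k
  have hrange : (∃ p, K.orderEmbOfFin rfl p = k) ↔ k ∈ K := by
    rw [← Set.mem_range, range_orderEmbOfFin, mem_coe]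
  simp only [← hrange, mem_image, mem_range, Fin.exists_iff]
  exact exists_congr fun p ↦ ⟨fun ⟨hp, h⟩ ↦ ⟨hp, kth_add_one hp ▸ h⟩,
    fun ⟨hp, h⟩ ↦ ⟨hp, (kth_add_one hp).trans h⟩⟩

lemma diagEntries_zero_eq_map_iff (hx : IsGTPattern K.card x) :
    diagEntries K.card x 0 = K.map Nat.castEmbedding ↔ ∀ p < K.card, x 0 p = kth K (p + 1) := by
  constructor
  · intro h
    have hmono : StrictMono fun p : Fin K.card ↦ x 0 p := fun p r hpr ↦
      hx.strictMonoOn 0 (by simp) (by simp) hpr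
    have hmono' : StrictMono fun p : Fin K.card ↦ (K.orderEmbOfFin rfl p : ℤ) := fun p r hpr ↦
      Int.ofNat_lt.2 ((K.orderEmbOfFin rfl).strictMono hpr)
    have hrange : (Set.range fun p : Fin K.card ↦ x 0 p) =
        Set.range fun p : Fin K.card ↦ (K.orderEmbOfFin rfl p : ℤ) := by
      rw [Set.range_comp' (fun k : ℕ ↦ (k : ℤ)), range_orderEmbOfFin]
      ext v
      simpa [mem_diagEntries, Fin.exists_iff] using Finset.ext_iff.1 h v
    intro p hp
    rw [kth_add_one hp]
    exact congrFun ((hmono.range_inj hmono').1 hrange) ⟨p, hp⟩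
  · intro h
    have himage := congrArg (Finset.map (Nat.castEmbedding (R := ℤ))) (image_kth_range K)
    rw [← himage, map_eq_image, image_image]
    exact image_congr fun p hp ↦ h p (by simpa using hp)

lemma isKTab_iff : IsKTab K c ↔ diagonals c ∈ gtPatterns K.card (K.map Nat.castEmbedding) := by
  rw [IsKTab, ← isGTPattern_diagonals_iff, and_comm]
  refine and_congr_right fun hc ↦ ?_
  rw [diagEntries_zero_eq_map_iff hc]
  exact ⟨fun h p hp ↦ h (p + 1) (by lia) hp, fun h p hp hpK ↦ by
    simpa [diagonals, Nat.sub_add_cancel hp] using h (p - 1) (by lia)⟩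

lemma gtPatterns_card_nonempty (K : Finset ℕ) :
    (gtPatterns K.card (K.map Nat.castEmbedding)).Nonempty := by
  have hx : IsGTPattern K.card fun _ p ↦ (kth K (p + 1) : ℤ) := by
    refine ⟨fun _ _ _ ↦ le_rfl, fun d p hp ↦ Int.ofNat_lt.2 ?_⟩
    rw [kth_add_one (p := p) (by lia), kth_add_one (p := p + 1) (by lia)]
    exact (K.orderEmbOfFin rfl).strictMono (Nat.lt_succ_self p)
  exact ⟨_, hx, (diagEntries_zero_eq_map_iff hx).2 fun _ _ ↦ rfl⟩

lemma IsGTPattern.sum_diagEntries (hx : IsGTPattern L x) (f : ℤ → ℤ) (d : ℕ) :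
    ∑ v ∈ diagEntries L x d, f v = ∑ p ∈ range (L - d), f (x d p) :=
  sum_image (by simpa using (hx.strictMonoOn d).injOn)

lemma sum_range_diagonals (F : ℕ → ℕ → ℤ) (L : ℕ) :
    ∑ d ∈ range L, ∑ p ∈ range (L - d), F (p + 1) (p + 1 + d) =
      ∑ p ∈ Icc 1 L, ∑ q ∈ Icc p L, F p q := by
  rw [sum_sigma', sum_sigma']
  refine sum_bij' (fun z _ ↦ ⟨z.2 + 1, z.2 + 1 + z.1⟩) (fun z _ ↦ ⟨z.2 - z.1, z.1 - 1⟩)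
    ?_ ?_ ?_ ?_ ?_ <;> grind

lemma IsKTab.gtWeight_diagonals (hc : IsKTab K c) (a : ℤ → ℤ → ℤ) :
    gtWeight a K.card (diagonals c) = tabSum a K c + ∑ k ∈ K, a k k := by
  obtain ⟨hx, hdiag⟩ := isKTab_iff.1 hc
  have hK : ∑ k ∈ K, a k k = ∑ p ∈ Icc 1 K.card, a (c p p) (c p p) := by
    calc ∑ k ∈ K, a k k = ∑ v ∈ diagEntries K.card (diagonals c) 0, a v v := by
          rw [hdiag, sum_map]; rfl
      _ = ∑ p ∈ range K.card, a (c (p + 1) (p + 1)) (c (p + 1) (p + 1)) :=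
          hx.sum_diagEntries (fun v ↦ a v v) 0
      _ = _ := by rw [range_eq_Ico, sum_Ico_add' (fun p ↦ a (c p p) (c p p))]; rfl
  have hrow : ∀ p ∈ Icc 1 K.card, ∑ q ∈ Icc p K.card, a (c p q) (c p q + ((q : ℤ) - p)) =
      ∑ q ∈ Icc (p + 1) K.card, a (c p q) (c p q + ((q : ℤ) - p)) + a (c p p) (c p p) := by
    intro p hp
    rw [Icc_add_one_left_eq_Ioc, ← sum_Ioc_add_eq_sum_Icc (mem_Icc.1 hp).2, sub_self, add_zero]
  calc gtWeight a K.card (diagonals c)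
      = ∑ d ∈ range K.card, ∑ p ∈ range (K.card - d),
          a (diagonals c d p) (diagonals c d p + d) :=
        sum_congr rfl fun d _ ↦ hx.sum_diagEntries (fun v ↦ a v (v + d)) d
    _ = ∑ p ∈ Icc 1 K.card, ∑ q ∈ Icc p K.card, a (c p q) (c p q + ((q : ℤ) - p)) := by
        rw [← sum_range_diagonals]
        simp [diagonals]
    _ = tabSum a K c + ∑ k ∈ K, a k k := by
        rw [hK, tabSum, ← sum_add_distrib]
        exact sum_congr rfl hrow

/-- The full column sum `a_{1,k} + ⋯ + a_{k,k}`, including the entry on the main diagonal. -/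
def colSum (a : ℤ → ℤ → ℤ) (k : ℕ) : ℤ := ∑ s ∈ Icc 1 k, a s k

variable {n : ℕ} {a : ℤ → ℤ → ℤ}

lemma colSum_eq_add (a : ℤ → ℤ → ℤ) {k : ℕ} (hk : 0 < k) :
    colSum a k = ∑ s ∈ Icc 1 (k - 1), a s k + a k k := by
  obtain ⟨k, rfl⟩ := Nat.exists_eq_add_of_le' hk
  exact sum_Icc_succ_top (by lia) _

lemma image_gtWeight_gtPatterns (a : ℤ → ℤ → ℤ) (K : Finset ℕ) :
    gtWeight a K.card '' gtPatterns K.card (K.map Nat.castEmbedding) =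
      (· + ∑ k ∈ K, a k k) '' {z | ∃ c, IsKTab K c ∧ z = tabSum a K c} := by
  ext z
  constructor
  · rintro ⟨x, hx, rfl⟩
    obtain ⟨c, rfl⟩ := diagonals_surjective x
    have hc := isKTab_iff.2 hx
    exact ⟨_, ⟨c, hc, rfl⟩, (hc.gtWeight_diagonals a).symm⟩
  · rintro ⟨_, ⟨c, hc, rfl⟩, rfl⟩
    exact ⟨diagonals c, isKTab_iff.1 hc, hc.gtWeight_diagonals a⟩

lemma tabSum_nonneg (ha : ∀ k l, k < l → 0 ≤ a k l) (K : Finset ℕ) (c : ℕ → ℕ → ℤ) :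
    0 ≤ tabSum a K c :=
  sum_nonneg fun p _ ↦ sum_nonneg fun q hq ↦ ha _ _ (by grind)

lemma isLeast_tabSum (ha : ∀ k l, k < l → 0 ≤ a k l) (K : Finset ℕ) :
    IsLeast {z | ∃ c, IsKTab K c ∧ z = tabSum a K c}
      (sInf {z | ∃ c, IsKTab K c ∧ z = tabSum a K c}) := by
  have hne : {z | ∃ c, IsKTab K c ∧ z = tabSum a K c}.Nonempty := by
    obtain ⟨x, hx⟩ := gtPatterns_card_nonempty K
    obtain ⟨c, rfl⟩ := diagonals_surjective x
    exact ⟨_, c, isKTab_iff.2 hx, rfl⟩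
  have hbdd : BddBelow {z | ∃ c, IsKTab K c ∧ z = tabSum a K c} :=
    ⟨0, by rintro _ ⟨c, -, rfl⟩; exact tabSum_nonneg ha K c⟩
  exact ⟨Int.csInf_mem hne hbdd, fun _ ↦ csInf_le hbdd⟩

lemma isLeast_MK_add_sum_colSum (ha : ∀ k l, k < l → 0 ≤ a k l) (hK0 : 0 ∉ K) (hK : K ≠ ∅)
    (hK' : K ≠ Icc 1 (n + 1)) :
    IsLeast (gtWeight a K.card '' gtPatterns K.card (K.map Nat.castEmbedding))
      (MK n a K + ∑ k ∈ K, colSum a k) := by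
  have hcol : ∑ k ∈ K, colSum a k = ∑ k ∈ K, ∑ s ∈ Icc 1 (k - 1), a s k + ∑ k ∈ K, a k k := by
    rw [← sum_add_distrib]
    exact sum_congr rfl fun k hk ↦
      colSum_eq_add a (Nat.pos_of_ne_zero (ne_of_mem_of_not_mem hk hK0))
  have hMK : MK n a K + ∑ k ∈ K, colSum a k =
      sInf {z | ∃ c, IsKTab K c ∧ z = tabSum a K c} + ∑ k ∈ K, a k k := by
    rw [MK, if_neg (not_or.2 ⟨hK, hK'⟩), hcol]
    ring
  rw [hMK, image_gtWeight_gtPatterns]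
  exact (add_left_mono (α := ℤ)).map_isLeast (isLeast_tabSum ha K)

lemma MK_congr {b : ℤ → ℤ → ℤ} (h : ∀ k l, k < l → a k l = b k l) (n : ℕ) (K : Finset ℕ) :
    MK n a K = MK n b K := by
  have htab (c : ℕ → ℕ → ℤ) : tabSum a K c = tabSum b K c :=
    sum_congr rfl fun p _ ↦ sum_congr rfl fun q hq ↦ h _ _ (by grind)
  have hcol : ∑ k ∈ K, ∑ s ∈ Icc 1 (k - 1), a s k = ∑ k ∈ K, ∑ s ∈ Icc 1 (k - 1), b s k :=
    sum_congr rfl fun k _ ↦ sum_congr rfl fun s hs ↦ h _ _ (by grind)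
  simp only [MK, htab, hcol]

end Tableaux

section Crystal

variable {n i m : ℕ} {a : ℤ → ℤ → ℤ}

lemma Astar_eq_swapGain_sub (a : ℤ → ℤ → ℤ) (him : i + m ≤ n) :
    Astar n a i (i + m) = swapGain a i (m + 1) - swapGain a i (n + 2 - i) := by
  rw [← neg_sub, ← sum_Ico_eq_swapGain_sub a i (show m + 1 ≤ n + 2 - i by lia),
    ← sum_neg_distrib, Astar]
  refine sum_bij' (fun t _ ↦ t - i) (fun d _ ↦ i + d) (by grind) (by grind) (by grind) (by grind) ?_
  intro t ht
  rw [mem_Icc] at ht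
  rw [neg_sub, Nat.cast_sub (by lia), add_sub_cancel, show (i + 1 + (t - i) : ℤ) = t + 1 by ring]

lemma isGreatest_epsStar (a : ℤ → ℤ → ℤ) (hi : i ≤ n) :
    IsGreatest (Astar n a i '' Set.Icc i n) (epsStar n a i) := by
  have hne : ((Icc i n).image (Astar n a i)).Nonempty := (nonempty_Icc.2 hi).image _
  rw [epsStar, ← coe_max' hne, WithBot.unbotD_coe, ← coe_Icc, ← coe_image]
  exact isGreatest_max' _ hne

lemma isLeast_lfStar (a : ℤ → ℤ → ℤ) (hi : i ≤ n) :
    IsLeast {l | l ∈ Icc i n ∧ Astar n a i l = epsStar n a i} (lfStar n a i) := by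
  obtain ⟨l, hl, hmax⟩ := (isGreatest_epsStar a hi).1
  have hne : ((Icc i n).filter fun l ↦ Astar n a i l = epsStar n a i).Nonempty :=
    ⟨l, mem_filter.2 ⟨mem_Icc.2 hl, hmax⟩⟩
  rw [lfStar, ← coe_min' hne, WithTop.untopD_coe, ← coe_filter]
  exact isLeast_min' _ hne

lemma IsLusztig.swapGain_le (ha : IsLusztig n a) {e : ℕ} (he : n + 1 - i ≤ e) :
    swapGain a i e ≤ swapGain a i (n + 1 - i) := by
  induction e, he using Nat.le_induction with
  | base => exact le_rfl
  | succ e he ih =>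
    have hzero : a (i + 1) (i + 1 + e) = 0 := ha.2 _ _ (by lia)
    have hnonneg : 0 ≤ a i (i + e) := ha.1 _ _
    have hsucc := swapGain_succ a i e
    lia

lemma IsLusztig.exists_isFirstMaxGain (ha : IsLusztig n a) (hi : i ≤ n) :
    ∃ m, lfStar n a i = i + m ∧ i + m ≤ n ∧ IsFirstMaxGain a i m := by
  obtain ⟨⟨hmem, hlf⟩, hmin⟩ := isLeast_lfStar a hi
  have hmax := (isGreatest_epsStar a hi).2
  obtain ⟨m, hm⟩ := Nat.exists_eq_add_of_le (mem_Icc.1 hmem).1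
  rw [hm] at hmem hlf hmin
  have hmn : i + m ≤ n := (mem_Icc.1 hmem).2
  have hA := Astar_eq_swapGain_sub a hmn
  have hle : ∀ d, i + d ≤ n → swapGain a i (d + 1) ≤ swapGain a i (m + 1) := by
    intro d hd
    have hAd := Astar_eq_swapGain_sub a hd
    have := hmax ⟨i + d, ⟨i.le_add_right d, hd⟩, rfl⟩
    lia
  refine ⟨m, hm, hmn, fun d ↦ ?_, fun d hd ↦ ?_⟩
  · rcases le_or_gt (i + d) n with hdn | hdn
    · exact hle d hdn
    · have hlast := hle (n - i) (by lia)
      rw [← Nat.sub_add_comm hi] at hlast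
      exact (ha.swapGain_le (by lia)).trans hlast
  · refine lt_of_le_of_ne (hle d (by lia)) fun heq ↦ ?_
    have hAd := Astar_eq_swapGain_sub a (show i + d ≤ n by lia)
    have := hmin ⟨mem_Icc.2 ⟨i.le_add_right d, by lia⟩, show _ = epsStar n a i by lia⟩
    lia

lemma ftilStar_eq_raise (hm : lfStar n a i = i + m) {k l : ℤ} (hkl : k < l) :
    ftilStar n a i k l = raise a i m k l := by
  simp only [ftilStar, raise, unitDatum, hm, Pi.add_apply, Pi.sub_apply]
  grind

lemma IsFirstMaxGain.raise_nonneg {i : ℤ} (hm : IsFirstMaxGain a i m) (ha : ∀ k l, 0 ≤ a k l)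
    {k l : ℤ} (hkl : k < l) : 0 ≤ raise a i m k l := by
  have hpos : 0 < m → 0 < a (i + 1) (i + 1 + m) := by
    intro hm0
    have hlt := hm.swapGain_lt hm0 le_rfl
    have hnonneg : 0 ≤ a i (i + m) := ha _ _
    have hsucc := swapGain_succ a i m
    lia
  have := ha k l
  simp only [raise, unitDatum, Pi.add_apply, Pi.sub_apply]
  grind

lemma colSum_unitDatum {j : ℕ} (hj : 1 ≤ j) (d k : ℕ) :
    colSum (unitDatum j d) k = if k = j + d then 1 else 0 := by
  have hentry (s : ℕ) : unitDatum j d s k = if s = j then if k = j + d then 1 else 0 else 0 := by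
    grind [unitDatum]
  simp only [colSum, hentry, sum_ite_eq', mem_Icc]
  grind

lemma colSum_raise (a : ℤ → ℤ → ℤ) (hi : 1 ≤ i) (m k : ℕ) :
    colSum (raise a i m) k = colSum a k := by
  have hup := colSum_unitDatum hi (m + 1) k
  have hdown := colSum_unitDatum (j := i + 1) (Nat.le_add_left 1 i) m k
  rw [add_right_comm, add_assoc, ← hup, Nat.cast_add_one] at hdown
  calc colSum (raise a i m) k
      = colSum a k + colSum (unitDatum i (m + 1)) k - colSum (unitDatum (i + 1) m) k := by
        simp only [colSum, raise, Pi.add_apply, Pi.sub_apply, sum_add_distrib, sum_sub_distrib]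
    _ = colSum a k := by rw [hdown, add_sub_cancel_right]

lemma map_cast_insert_erase {K : Finset ℕ} (hi : i ∉ K) (hi' : i + 1 ∈ K) :
    (insert i (K.erase (i + 1))).map Nat.castEmbedding =
      (K.map Nat.castEmbedding).map (Equiv.swap (i : ℤ) (i + 1)).toEmbedding := by
  ext v
  rw [mem_map_equiv, Equiv.symm_swap]
  simp only [mem_map, Nat.castEmbedding_apply]
  grind

lemma sum_insert_erase {K : Finset ℕ} (hi : i ∉ K) (hi' : i + 1 ∈ K) (f : ℕ → ℤ) :
    ∑ k ∈ insert i (K.erase (i + 1)), f k = ∑ k ∈ K, f k + (f i - f (i + 1)) := by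
  rw [sum_insert (by simp [hi]), ← sum_erase_add K f hi']
  ring

lemma IsLusztig.isLeast_MK_insert_erase (ha : IsLusztig n a) (hi : 1 ≤ i) (hin : i ≤ n)
    {K : Finset ℕ} (hK : 0 ∉ K) (hiK : i ∉ K) (hi'K : i + 1 ∈ K) :
    IsLeast (gtWeight a K.card ''
        gtPatterns K.card ((K.map Nat.castEmbedding).map (Equiv.swap (i : ℤ) (i + 1)).toEmbedding))
      (MK n a (insert i (K.erase (i + 1))) +
        (∑ k ∈ K, colSum a k + (colSum a i - colSum a (i + 1)))) := by
  have hcard : (insert i (K.erase (i + 1))).card = K.card := by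
    rw [card_insert_of_notMem (by simp [hiK]), card_erase_add_one hi'K]
  rw [← map_cast_insert_erase hiK hi'K, ← sum_insert_erase hiK hi'K, ← hcard]
  refine isLeast_MK_add_sum_colSum (fun k l _ ↦ ha.1 k l) (by grind) (insert_ne_empty _ _) ?_
  exact fun h ↦ absurd (Finset.ext_iff.1 h (i + 1)) (by simp [hin])

lemma IsLusztig.MK_Icc_sub_MK (ha : IsLusztig n a) (hi : 1 ≤ i) (hmn : i + m ≤ n)
    (hm : IsFirstMaxGain a i m) :
    MK n a (Icc (i + 1) (n + 1)) - MK n a (insert i (Icc (i + 2) (n + 1))) =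
      swapGain a i (m + 1) + (colSum a i - colSum a (i + 1)) := by
  have hcast : (Icc (i + 1) (n + 1)).map Nat.castEmbedding = Icc ((i : ℤ) + 1) (n + 1) := by
    ext v
    simp only [mem_map, mem_Icc, Nat.castEmbedding_apply]
    exact ⟨by grind, fun h ↦ ⟨v.toNat, by lia⟩⟩
  have hinsert : insert i (Icc (i + 2) (n + 1)) =
      insert i ((Icc (i + 1) (n + 1)).erase (i + 1)) := by grind
  have hleast := isLeast_MK_add_sum_colSum (n := n) (K := Icc (i + 1) (n + 1))
    (fun k l _ ↦ ha.1 k l) (by simp) (nonempty_Icc.2 (by lia)).ne_empty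
    (fun h ↦ absurd (Finset.ext_iff.1 h i) (by grind))
  have hleast' := ha.isLeast_MK_insert_erase hi (by lia) (K := Icc (i + 1) (n + 1)) (by simp)
    (by simp) (left_mem_Icc.2 (by lia))
  rw [hcast] at hleast hleast'
  have := isLeast_gtWeight_Icc_eq_add_swapGain hm (by lia) hleast hleast'
  rw [hinsert]
  lia

end Crystal

/-- Anderson–Mirković conjecture, type `A`, in terms of Lusztig data: for
every Lusztig datum `a`, every `1 ≤ i ≤ n`, and every `K ∈ M_n^×` with `i ∉ K` and
`i+1 ∈ K`, one has `M_K(f̃_i^* a) = min{ M_K(a), M_{s_iK}(a) + c_i^*(a) }`, where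
`s_iK = (K ∖ {i+1}) ∪ {i}` and `c_i^*(a) = M_{[i+1,n+1]}(a) − M_{{i}∪[i+2,n+1]}(a) − 1`. -/
theorem stmt16 (n : ℕ) (hn : 1 ≤ n) (a : ℤ → ℤ → ℤ) (ha : IsLusztig n a)
    (i : ℕ) (hi1 : 1 ≤ i) (hi2 : i ≤ n)
    (K : Finset ℕ) (hK : K ⊆ Finset.Icc 1 (n + 1)) (hKne : K ≠ ∅)
    (hKfull : K ≠ Finset.Icc 1 (n + 1)) (hiK : i ∉ K) (hi1K : i + 1 ∈ K) :
    MK n (ftilStar n a i) K =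
      min (MK n a K)
        (MK n a (insert i (K.erase (i + 1))) +
          (MK n a (Finset.Icc (i + 1) (n + 1)) -
            MK n a (insert i (Finset.Icc (i + 2) (n + 1))) - 1)) := by
  obtain ⟨m, hlf, hmn, hm⟩ := ha.exists_isFirstMaxGain hi2
  have hK0 : 0 ∉ K := fun h ↦ absurd (hK h) (by simp)
  have hleast := isLeast_MK_add_sum_colSum (fun k l _ ↦ ha.1 k l) hK0 hKne hKfull
  have hleast_swap := ha.isLeast_MK_insert_erase hi1 hi2 hK0 hiK hi1K
  have hleast_raise := isLeast_MK_add_sum_colSum (fun k l ↦ hm.raise_nonneg ha.1) hK0 hKne hKfull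
  simp only [colSum_raise a hi1] at hleast_raise
  have hmin := hleast_raise.unique
    (isLeast_gtWeight_raise hm (by simpa using hiK) (mem_map_of_mem _ hi1K) hleast hleast_swap)
  rw [MK_congr (fun k l ↦ ftilStar_eq_raise hlf), ha.MK_Icc_sub_MK hi1 hmn hm]
  lia
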